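/- arXiv:1711.03706 — 6 statements merged into one kernel-verified Lean document; each statement's English description precedes it below -/
import Mathlib

section
/- Let Z be a ℂ-derivation of A such that Z (E q) = 0 for every q ∈ ℤ (i.e. Z has no ∂/∂u component). If the commutator bracket ⁅D, Z⁆ vanishes, then Z = 0. -/
set_option synthInstance.maxHeartbeats 1000000
set_option maxHeartbeats 1000000

/-!
Applying `⁅D, Z⁆ = 0` to `E 1` gives `0 = D (Z (E 1)) = Z (D (E 1)) = Z (u₁ * E 1) = E 1 * Z u₁`,
and `E 1` is invertible, so `Z u₁ = 0`. Since `u_{n+1} = D uₙ`, commutation with `D` propagates this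
to `Z uₙ = 0` for all `n ≥ 1`. The `uₙ` and the `E q` generate the algebra, so `Z = 0`.
-/

noncomputable section

/-- The algebra of "quasipolynomials": the group algebra of `ℤ` (group element `q`
modelling `e^{q·u}`) with coefficients in polynomials in countably many variables
(variable of index `n-1` modelling the `n`-th `x`-derivative of `u`). -/
abbrev QP : Type := AddMonoidAlgebra (MvPolynomial ℕ ℂ) ℤ

/-- `E q` models `e^{q·u}`. -/
def E (q : ℤ) : QP := AddMonoidAlgebra.single q 1

/-- `uvar n` models the `n`-th derivative `∂ⁿu/∂xⁿ` (for `n ≥ 1`); it is the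
polynomial generator of index `n - 1`. -/
def uvar (n : ℕ) : QP := AddMonoidAlgebra.single 0 (MvPolynomial.X (n - 1))

/-- `D` is the total `x`-derivative: the unique `ℂ`-derivation of `QP` with
`D uₙ = u_{n+1}` for `n ≥ 1` and `D (E q) = q • (u₁ * E q)`. -/
def IsD (D : Derivation ℂ QP QP) : Prop :=
  (∀ n : ℕ, 1 ≤ n → D (uvar n) = uvar (n + 1)) ∧
  (∀ q : ℤ, D (E q) = q • (uvar 1 * E q))

/-- `X₀` models `∂/∂u`: the unique `ℂ`-derivation with `X₀ uₙ = 0` and `X₀ (E q) = q • E q`. -/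
def IsX0 (X : Derivation ℂ QP QP) : Prop :=
  (∀ n : ℕ, 1 ≤ n → X (uvar n) = 0) ∧ (∀ q : ℤ, X (E q) = q • E q)

/-- `X_f` is the unique `ℂ`-derivation with `X_f (E q) = 0` for all `q` and
`X_f uₙ = D^[n-1] f` for all `n ≥ 1`. -/
def IsXf (D : Derivation ℂ QP QP) (f : QP) (Xf : Derivation ℂ QP QP) : Prop :=
  (∀ q : ℤ, Xf (E q) = 0) ∧ (∀ n : ℕ, 1 ≤ n → Xf (uvar n) = (⇑D)^[n - 1] f)

/-- The elements `uvar n` (`n ≥ 1`) and `E q` generate `QP` as a `ℂ`-algebra, so a derivation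
killing all of them is zero. -/
theorem eq_zero_of_generators (Z : Derivation ℂ QP QP) (hE : ∀ q : ℤ, Z (E q) = 0)
    (hu : ∀ n : ℕ, 1 ≤ n → Z (uvar n) = 0) : Z = 0 := by
  have hp : ∀ p : MvPolynomial ℕ ℂ, Z (AddMonoidAlgebra.single 0 p) = 0 := by
    intro p
    induction p using MvPolynomial.induction_on with
    | C a => exact Z.map_algebraMap a
    | add p q hp hq => rw [AddMonoidAlgebra.single_add, map_add, hp, hq, add_zero]
    | mul_X p n hp =>
      have h : (AddMonoidAlgebra.single 0 (p * MvPolynomial.X n) : QP)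
          = AddMonoidAlgebra.single 0 p * uvar (n + 1) := by
        simp [uvar]
      rw [h, Z.leibniz, hp, hu (n + 1) (by omega), smul_zero, smul_zero, add_zero]
  refine Derivation.ext fun f => ?_
  induction f using AddMonoidAlgebra.induction_linear with
  | zero => simp
  | add f g hf hg => rw [map_add, hf, hg, ← map_add]
  | single q p =>
    have h : (AddMonoidAlgebra.single q p : QP) = AddMonoidAlgebra.single 0 p * E q := by
      simp [E]
    rw [h, Z.leibniz, hp, hE, smul_zero, smul_zero, add_zero, Derivation.zero_apply]

/-- If a `ℂ`-derivation `Z` of `QP` kills every `E q` (i.e. has no `∂/∂u` component)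
and commutes with the total derivative `D`, then `Z = 0`. -/
theorem stmt_0 (D Z : Derivation ℂ QP QP) (hD : IsD D)
    (hZ : ∀ q : ℤ, Z (E q) = 0) (hcomm : ⁅D, Z⁆ = 0) : Z = 0 := by
  have hc : ∀ x, D (Z x) = Z (D x) := fun x => by
    have h := DFunLike.congr_fun hcomm x
    rw [Derivation.commutator_apply, Derivation.zero_apply] at h
    exact sub_eq_zero.mp h
  have hinv : E (-1) * E 1 = 1 := by
    rw [E, E, AddMonoidAlgebra.single_mul_single, neg_add_cancel, mul_one]
    exact AddMonoidAlgebra.one_def.symm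
  have h1 : Z (uvar 1) = 0 := by
    have h := hc (E 1)
    rw [hZ, map_zero, hD.2, one_smul, Z.leibniz, hZ, smul_zero, zero_add, smul_eq_mul] at h
    calc Z (uvar 1) = E (-1) * E 1 * Z (uvar 1) := by rw [hinv, one_mul]
      _ = 0 := by rw [mul_assoc, ← h, mul_zero]
  refine eq_zero_of_generators Z hZ fun n hn => ?_
  induction n, hn using Nat.le_induction with
  | base => exact h1
  | succ n hn ih => rw [← hD.1 n hn, ← hc, ih, map_zero]
end
end

section
/- For every f lying in the ℂ-linear span of {E q : q ∈ ℤ}, the commutator satisfies ⁅D, X_f⁆ = −(f • X₀), where f • X₀ denotes the A-module scalar action of f on the derivation X₀. -/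
/-!
A `ℂ`-derivation of `QP` is determined by its values on the elements `E q` and `uvar n`, since these
generate `QP` as a `ℂ`-algebra (`derivation_ext_generators`). Both sides of the claim are
derivations, so it is enough to compare them on generators.

On `uₙ` the bracket is `D (D^{n-1} f) - X_f u_{n+1} = Dⁿ f - Dⁿ f = 0`, and `X₀ uₙ = 0`. On `E q`
the first term `D (X_f (E q))` vanishes, and the second is
`X_f (q • (u₁ * E q)) = q • (f * E q)` by the Leibniz rule and `X_f u₁ = f`, which is
`f • X₀` evaluated at `E q`.
-/

set_option synthInstance.maxHeartbeats 1000000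
set_option maxHeartbeats 1000000

noncomputable section

/-- The elements `E q` and `uvar n` generate `QP` as a `ℂ`-algebra, so a derivation is determined
by its values on them. -/
theorem derivation_ext_generators {d₁ d₂ : Derivation ℂ QP QP}
    (hE : ∀ q : ℤ, d₁ (E q) = d₂ (E q))
    (hu : ∀ n : ℕ, 1 ≤ n → d₁ (uvar n) = d₂ (uvar n)) : d₁ = d₂ := by
  have h0 : ∀ p : MvPolynomial ℕ ℂ,
      d₁ (AddMonoidAlgebra.single 0 p : QP) = d₂ (AddMonoidAlgebra.single 0 p : QP) := by
    intro p
    induction p using MvPolynomial.induction_on with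
    | C a =>
      have h : (AddMonoidAlgebra.single 0 (MvPolynomial.C a) : QP) = algebraMap ℂ QP a := rfl
      rw [h, Derivation.map_algebraMap, Derivation.map_algebraMap]
    | add p r hp hr =>
      rw [AddMonoidAlgebra.single_add, map_add, map_add, hp, hr]
    | mul_X p n hp =>
      have h : (AddMonoidAlgebra.single 0 (p * MvPolynomial.X n) : QP)
          = AddMonoidAlgebra.single 0 p * uvar (n + 1) := by
        simp [uvar]
      rw [h, Derivation.leibniz, Derivation.leibniz, hp, hu (n + 1) (Nat.le_add_left 1 n)]
  refine Derivation.ext fun x => ?_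
  induction x using AddMonoidAlgebra.induction_linear with
  | zero => rw [map_zero, map_zero]
  | add x y hx hy => rw [map_add, map_add, hx, hy]
  | single q p =>
    have h : (AddMonoidAlgebra.single q p : QP) = AddMonoidAlgebra.single 0 p * E q := by
      simp [E]
    rw [h, Derivation.leibniz, Derivation.leibniz, h0, hE]

/-- For `f` in the `ℂ`-linear span of the `E q` one has `⁅D, X_f⁆ = -(f • X₀)`,
where `•` is the `QP`-module structure on derivations. -/
theorem stmt_1 (D X0 : Derivation ℂ QP QP) (hD : IsD D) (hX0 : IsX0 X0)
    (f : QP) (hf : f ∈ Submodule.span ℂ (Set.range E))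
    (Xf : Derivation ℂ QP QP) (hXf : IsXf D f Xf) :
    ⁅D, Xf⁆ = -(f • X0) := by
  obtain ⟨hDu, hDE⟩ := hD
  obtain ⟨hX0u, hX0E⟩ := hX0
  obtain ⟨hXE, hXu⟩ := hXf
  apply derivation_ext_generators
  · intro q
    have h1 : Xf (uvar 1) = f := hXu 1 le_rfl
    rw [Derivation.commutator_apply, hXE, map_zero, hDE, map_zsmul, Derivation.leibniz, hXE, h1,
      Derivation.neg_apply, Derivation.smul_apply, hX0E, smul_zero, zero_add, zero_sub,
      smul_eq_mul, smul_eq_mul, mul_smul_comm, mul_comm]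
  · intro n hn
    obtain ⟨m, rfl⟩ := Nat.exists_eq_add_of_le' hn
    rw [Derivation.commutator_apply, hXu _ hn, hDu _ hn, hXu _ (Nat.le_add_left 1 _),
      Derivation.neg_apply, Derivation.smul_apply, hX0u _ hn, smul_zero, neg_zero,
      Nat.add_sub_cancel, Nat.add_sub_cancel, Function.iterate_succ_apply', sub_self]
end
end

section
/- One has ⁅X₀, X_{E 1}⁆ = X_{E 1}, and the Lie subalgebra of Derivation ℂ A A generated by {X₀, X_{E 1}} coincides with the ℂ-linear span of X₀ and X_{E 1}; in particular the characteristic Lie algebra of the Liouville equation u_{xy} = e^u is 2-dimensional, with basis X₀, X_{E 1} and unique relation ⁅X₀, X_{E 1}⁆ = X_{E 1}. -/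
/-! The algebra `QP` is generated by the elements `E q` and `uₙ`, so a derivation is determined by
its values on them (`QP_derivation_ext`). On these generators `X₀` commutes with `D`; hence
`X₀ (D^[n] (E 1)) = D^[n] (X₀ (E 1)) = D^[n] (E 1)`, which is exactly the relation
`⁅X₀, X₁⁆ = X₁` evaluated at `u_{n+1}`, while at `E q` both sides vanish. The relation makes the
linear span of `X₀, X₁` closed under the bracket, so it is the generated Lie algebra. Evaluating a
linear relation between `X₀` and `X₁` at `E 1` and at `u₁` gives linear independence. -/

set_option synthInstance.maxHeartbeats 1000000
set_option maxHeartbeats 1000000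

noncomputable section

/-- The elements `E q` and `uₙ`, `n ≥ 1`, generate `QP` as a `ℂ`-algebra. -/
theorem QP_adjoin_eq_top :
    Algebra.adjoin ℂ (Set.range E ∪ uvar '' {n | 1 ≤ n}) = ⊤ := by
  rw [eq_top_iff]
  rintro x -
  set S := Algebra.adjoin ℂ (Set.range E ∪ uvar '' {n | 1 ≤ n}) with hS
  have h0 : ∀ p : MvPolynomial ℕ ℂ, (AddMonoidAlgebra.single 0 p : QP) ∈ S := by
    intro p
    induction p using MvPolynomial.induction_on with
    | C a => exact S.algebraMap_mem a
    | add p q hp hq =>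
      rw [AddMonoidAlgebra.single_add]
      exact S.add_mem hp hq
    | mul_X p n hp =>
      have hX : (AddMonoidAlgebra.single 0 (MvPolynomial.X n) : QP) ∈ S :=
        Algebra.subset_adjoin (Or.inr ⟨n + 1, by simp, by simp [uvar]⟩)
      have := S.mul_mem hp hX
      rwa [AddMonoidAlgebra.single_mul_single, add_zero] at this
  have h1 : ∀ (q : ℤ) (p : MvPolynomial ℕ ℂ), (AddMonoidAlgebra.single q p : QP) ∈ S := by
    intro q p
    have hE : E q ∈ S := Algebra.subset_adjoin (Or.inl ⟨q, rfl⟩)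
    have := S.mul_mem (h0 p) hE
    rwa [E, AddMonoidAlgebra.single_mul_single, zero_add, mul_one] at this
  induction x using AddMonoidAlgebra.induction_linear with
  | zero => exact S.zero_mem
  | add f g hf hg => exact S.add_mem hf hg
  | single q p => exact h1 q p

theorem QP_derivation_ext {X Y : Derivation ℂ QP QP} (hE : ∀ q, X (E q) = Y (E q))
    (hu : ∀ n, 1 ≤ n → X (uvar n) = Y (uvar n)) : X = Y := by
  refine Derivation.ext_of_adjoin_eq_top _ QP_adjoin_eq_top ?_
  rintro _ (⟨q, rfl⟩ | ⟨n, hn, rfl⟩)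
  · exact hE q
  · exact hu n hn

/-- `∂/∂u` commutes with the total derivative. -/
theorem lie_X0_D {D X0 : Derivation ℂ QP QP} (hD : IsD D) (hX0 : IsX0 X0) : ⁅X0, D⁆ = 0 := by
  apply QP_derivation_ext
  · intro q
    simp only [Derivation.commutator_apply, hD.2, hX0.2, map_zsmul, Derivation.leibniz,
      hX0.1 1 le_rfl, add_zero, Derivation.coe_zero, Pi.zero_apply, smul_eq_mul,
      mul_smul_comm, mul_zero, sub_self]
  · intro n hn
    simp [Derivation.commutator_apply, hD.1 n hn, hX0.1 n hn, hX0.1 (n + 1) (by lia)]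

theorem X0_iterate_D {D X0 : Derivation ℂ QP QP} (hD : IsD D) (hX0 : IsX0 X0) (n : ℕ) :
    X0 ((⇑D)^[n] (E 1)) = (⇑D)^[n] (E 1) := by
  have hc : Function.Commute X0 D := fun x => by
    have h := congrArg (fun d : Derivation ℂ QP QP => d x) (lie_X0_D hD hX0)
    simpa [Derivation.commutator_apply, sub_eq_zero] using h
  rw [(hc.iterate_right n) (E 1), hX0.2, one_smul]

theorem lie_X0_X1 {D X0 X1 : Derivation ℂ QP QP} (hD : IsD D) (hX0 : IsX0 X0)
    (hX1 : IsXf D (E 1) X1) : ⁅X0, X1⁆ = X1 := by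
  apply QP_derivation_ext
  · intro q
    simp [Derivation.commutator_apply, hX0.2, hX1.1]
  · intro n hn
    rw [Derivation.commutator_apply, hX1.2 n hn, hX0.1 n hn, map_zero, sub_zero,
      X0_iterate_D hD hX0]

theorem E_ne_zero (q : ℤ) : E q ≠ 0 := by
  exact fun h => one_ne_zero (AddMonoidAlgebra.single_eq_zero.mp h)

theorem linearIndependent_X0_X1 {D X0 X1 : Derivation ℂ QP QP} (hX0 : IsX0 X0)
    (hX1 : IsXf D (E 1) X1) : LinearIndependent ℂ ![X0, X1] := by
  refine (LinearIndependent.pair_iff (R := ℂ) (M := Derivation ℂ QP QP)).mpr ?_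
  intro a b h
  have h1 := congrArg (fun d : Derivation ℂ QP QP => d (E 1)) h
  have h2 := congrArg (fun d : Derivation ℂ QP QP => d (uvar 1)) h
  simp only [Derivation.add_apply, Derivation.smul_apply, hX0.2, hX1.1, one_smul, smul_zero,
    add_zero, Derivation.coe_zero, Pi.zero_apply] at h1
  simp only [Derivation.add_apply, Derivation.smul_apply, hX0.1 1 le_rfl, hX1.2 1 le_rfl,
    Nat.sub_self, Function.iterate_zero, id, smul_zero, zero_add, Derivation.coe_zero,
    Pi.zero_apply] at h2
  exact ⟨(smul_eq_zero.mp h1).resolve_right (E_ne_zero 1),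
    (smul_eq_zero.mp h2).resolve_right (E_ne_zero 1)⟩

/-- If `⁅x, y⁆ = y`, the Lie subalgebra generated by `x` and `y` is their linear span. -/
theorem lieSpan_pair_toSubmodule {R L : Type*} [CommRing R] [LieRing L] [LieAlgebra R L]
    {x y : L} (h : ⁅x, y⁆ = y) :
    (LieSubalgebra.lieSpan R L {x, y}).toSubmodule = Submodule.span R {x, y} := by
  apply le_antisymm
  · let K : LieSubalgebra R L :=
      { Submodule.span R {x, y} with
        lie_mem' := by
          intro u v hu hv
          obtain ⟨a, b, rfl⟩ := Submodule.mem_span_pair.mp hu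
          obtain ⟨c, d, rfl⟩ := Submodule.mem_span_pair.mp hv
          have h' : ⁅y, x⁆ = -y := by rw [← lie_skew, h]
          refine Submodule.mem_span_pair.mpr ⟨0, a * d - b * c, ?_⟩
          simp only [lie_add, add_lie, lie_smul, smul_lie, lie_self, h, h']
          module }
    have hK : LieSubalgebra.lieSpan R L {x, y} ≤ K :=
      LieSubalgebra.lieSpan_le.mpr Submodule.subset_span
    exact hK
  · exact Submodule.span_le.mpr LieSubalgebra.subset_lieSpan

/-- For the Liouville equation `u_{xy} = e^u`: with `X₁ := X_{E 1}` one has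
`⁅X₀, X₁⁆ = X₁`, the Lie subalgebra of `Derivation ℂ QP QP` generated by `X₀, X₁`
coincides with their `ℂ`-linear span, `X₀, X₁` are linearly independent, and the
characteristic Lie algebra is `2`-dimensional. -/
theorem stmt_2 (D X0 X1 : Derivation ℂ QP QP) (hD : IsD D) (hX0 : IsX0 X0)
    (hX1 : IsXf D (E 1) X1) :
    ⁅X0, X1⁆ = X1 ∧
    ((LieSubalgebra.lieSpan ℂ (Derivation ℂ QP QP) {X0, X1} : Set (Derivation ℂ QP QP))
      = (Submodule.span ℂ {X0, X1} : Set (Derivation ℂ QP QP))) ∧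
    LinearIndependent ℂ ![X0, X1] ∧
    Module.finrank ℂ (LieSubalgebra.lieSpan ℂ (Derivation ℂ QP QP) {X0, X1}) = 2 := by
  have hspan := lieSpan_pair_toSubmodule (R := ℂ) (L := Derivation ℂ QP QP) (lie_X0_X1 hD hX0 hX1)
  have hli := linearIndependent_X0_X1 hX0 hX1
  refine ⟨lie_X0_X1 hD hX0 hX1, congrArg SetLike.coe hspan, hli, ?_⟩
  have hrank := finrank_span_eq_card hli
  rw [Matrix.range_cons_cons_empty, ← hspan] at hrank
  exact hrank
end
end

section
/- With X₃' := ⁅X₁', X₂'⁆, X₄' := −⁅X₁', X₃'⁆ and X₅' := ⁅X₂', X₃'⁆, one has ⁅X₁', X₄'⁆ = 0 and ⁅X₂', X₅'⁆ = 0. -/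
/-!
The idea is to control each iterated bracket through its bracket with `D`. From the definitions,
`⁅D, X_f⁆ = -f • X₀`, `⁅D, X₀⁆ = 0`, and `⁅X₀, X₁'⁆ = X₁'`, `⁅X₀, X₂'⁆ = -X₂'`, so the Jacobi
identity determines `⁅D, ·⁆` on all brackets of `X₁'` and `X₂'`. It yields `⁅D, X₃'⁆ = E 1 • X₂' -
E (-1) • X₁'` and `⁅D, X₄'⁆ = -E 1 • X₃'`, and then the two contributions to `⁅D, ⁅X₁', X₄'⁆⁆`
cancel; the other bracket is the same computation with the roles of `X₁'` and `X₂'` exchanged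
(`lie_D_serre`).

It remains to see that a derivation `Z` which commutes with `D` and kills every `E q` is zero
(`eq_zero_of_lie_D_eq_zero`): applying `Z` to `D (E 1) = u₁ * E 1` gives `Z u₁ = 0` because `E 1` is
a unit, and `Z u_{n+1} = D (Z uₙ)` propagates this to all `uₙ`.
-/

set_option synthInstance.maxHeartbeats 1000000
set_option maxHeartbeats 1000000

noncomputable section

lemma lie_smul_right {A : Type*} [CommRing A] [Algebra ℂ A]
    (Y Z : Derivation ℂ A A) (f : A) :
    ⁅Y, f • Z⁆ = Y f • Z + f • ⁅Y, Z⁆ := by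
  ext1 a
  simp only [Derivation.commutator_apply, Derivation.smul_apply, Derivation.add_apply,
    Derivation.leibniz, smul_eq_mul]
  ring

lemma lie_smul_left {A : Type*} [CommRing A] [Algebra ℂ A]
    (Y Z : Derivation ℂ A A) (f : A) :
    ⁅f • Y, Z⁆ = f • ⁅Y, Z⁆ - Z f • Y := by
  ext1 a
  simp only [Derivation.commutator_apply, Derivation.smul_apply, Derivation.sub_apply,
    Derivation.leibniz, smul_eq_mul]
  ring

/-- The cancellation behind both Serre-type relations: the sign `ε = ±1` is the `X₀`-weight of `P`,
and `ε = 1`, `ε = -1` correspond to `(P, Q) = (X₁', X₂')` and `(P, Q) = (X₂', X₁')`. -/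
lemma lie_D_serre {A : Type*} [CommRing A] [Algebra ℂ A] {D X0 P Q : Derivation ℂ A A}
    {e f : A} {ε : ℤ} (hε : ε * ε = 1)
    (hPe : P e = 0) (hPf : P f = 0) (hQe : Q e = 0)
    (hDP : ⁅D, P⁆ = -(ε • e • X0)) (hDQ : ⁅D, Q⁆ = ε • f • X0)
    (hP : ⁅X0, P⁆ = ε • P) (hQ : ⁅X0, Q⁆ = -(ε • Q)) : ⁅D, ⁅P, ⁅P, ⁅P, Q⁆⁆⁆⁆ = 0 := by
  have hP' : ⁅P, X0⁆ = -(ε • P) := by rw [← lie_skew, hP]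
  have hRe : (⁅P, Q⁆ : Derivation ℂ A A) e = 0 := by
    simp [Derivation.commutator_apply, hPe, hQe]
  have hSe : (⁅P, ⁅P, Q⁆⁆ : Derivation ℂ A A) e = 0 := by
    rw [Derivation.commutator_apply, hRe, hPe, map_zero, map_zero, sub_zero]
  have hX0R : ⁅X0, ⁅P, Q⁆⁆ = 0 := by
    rw [leibniz_lie, hP, hQ, smul_lie, lie_neg, lie_smul, add_neg_cancel]
  have hX0S : ⁅X0, ⁅P, ⁅P, Q⁆⁆⁆ = ε • ⁅P, ⁅P, Q⁆⁆ := by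
    rw [leibniz_lie, hX0R, hP, smul_lie, lie_zero, add_zero]
  have hDR : ⁅D, ⁅P, Q⁆⁆ = e • Q - f • P := by
    rw [leibniz_lie, hDP, hDQ, neg_lie, smul_lie, lie_smul, lie_smul_left, lie_smul_right,
      hQ, hP', hPf, hQe, zero_smul, sub_zero, zero_add, smul_neg, smul_neg, smul_neg,
      smul_neg, neg_neg, smul_comm e ε Q, smul_comm f ε P, smul_smul, smul_smul, hε, one_smul,
      one_smul, sub_eq_add_neg]
  have hDS : ⁅D, ⁅P, ⁅P, Q⁆⁆⁆ = e • ⁅P, Q⁆ := by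
    rw [leibniz_lie, hDP, hDR, neg_lie, smul_lie, lie_smul_left, lie_sub, lie_smul_right,
      lie_smul_right, hX0R, hRe, hPe, hPf, lie_self]
    simp
  rw [leibniz_lie, hDP, hDS, neg_lie, smul_lie, lie_smul_left, lie_smul_right, hX0S, hSe, hPe,
    zero_smul, zero_smul, sub_zero, zero_add, smul_comm e ε, smul_smul, hε, one_smul,
    neg_add_cancel]

/-! The additive and Lie ring lemmas used on `Derivation ℂ QP QP` are restated for
derivations of an arbitrary algebra, because applying the general ones there fails to identify the
instances. -/

lemma derivation_lie_neg {A : Type*} [CommRing A] [Algebra ℂ A] (Y Z : Derivation ℂ A A) :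
    ⁅Y, -Z⁆ = -⁅Y, Z⁆ := lie_neg Y Z

lemma derivation_lie_skew {A : Type*} [CommRing A] [Algebra ℂ A] (Y Z : Derivation ℂ A A) :
    -⁅Z, Y⁆ = ⁅Y, Z⁆ := lie_skew Y Z

lemma derivation_neg_neg {A : Type*} [CommRing A] [Algebra ℂ A] (Y : Derivation ℂ A A) :
    - -Y = Y := neg_neg Y

lemma derivation_neg_zero {A : Type*} [CommRing A] [Algebra ℂ A] :
    -(0 : Derivation ℂ A A) = 0 := neg_zero

lemma E_mul (p q : ℤ) : E p * E q = E (p + q) := by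
  rw [E, E, E, AddMonoidAlgebra.single_mul_single, mul_one]

lemma E_zero : E 0 = 1 := rfl

/-- `QP` is generated as an algebra by the `E q` and the `uₙ`, so these determine a derivation. -/
lemma derivation_ext {Y Z : Derivation ℂ QP QP} (hE : ∀ q, Y (E q) = Z (E q))
    (hu : ∀ n, 1 ≤ n → Y (uvar n) = Z (uvar n)) : Y = Z := by
  have hpoly : ∀ p : MvPolynomial ℕ ℂ,
      Y (AddMonoidAlgebra.single 0 p) = Z (AddMonoidAlgebra.single 0 p) := by
    intro p
    induction p using MvPolynomial.induction_on with
    | C a =>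
      have h : (AddMonoidAlgebra.single 0 (MvPolynomial.C a) : QP) = algebraMap ℂ QP a := rfl
      rw [h, Derivation.map_algebraMap, Derivation.map_algebraMap]
    | add p q hp hq => rw [AddMonoidAlgebra.single_add, map_add, map_add, hp, hq]
    | mul_X p n hp =>
      have h : (AddMonoidAlgebra.single 0 (p * MvPolynomial.X n) : QP)
          = AddMonoidAlgebra.single 0 p * uvar (n + 1) := by
        simp [uvar]
      rw [h, Derivation.leibniz, Derivation.leibniz, hp, hu _ (Nat.le_add_left 1 n)]
  ext1 a
  induction a using AddMonoidAlgebra.induction_linear with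
  | zero => simp
  | add f g hf hg => rw [map_add, map_add, hf, hg]
  | single q p =>
    have h : (AddMonoidAlgebra.single q p : QP) = E q * AddMonoidAlgebra.single 0 p := by
      simp [E]
    rw [h, Derivation.leibniz, Derivation.leibniz, hE, hpoly]

lemma eq_zero_of_lie_D_eq_zero {D Z : Derivation ℂ QP QP} (hD : IsD D)
    (hZ : ∀ q, Z (E q) = 0) (h : ⁅D, Z⁆ = 0) : Z = 0 := by
  have hcomm : ∀ a, Z (D a) = D (Z a) := fun a => by
    have := congrArg (fun W : Derivation ℂ QP QP => W a) h
    simp only [Derivation.commutator_apply, Derivation.zero_apply] at this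
    exact (sub_eq_zero.mp this).symm
  have h1 : Z (uvar 1) = 0 := by
    have h2 := hcomm (E 1)
    rw [hD.2, one_smul, Derivation.leibniz, hZ, map_zero, smul_zero, zero_add, smul_eq_mul] at h2
    calc Z (uvar 1) = E (-1) * (E 1 * Z (uvar 1)) := by
          rw [← mul_assoc, E_mul, neg_add_cancel, E_zero, one_mul]
      _ = 0 := by rw [h2, mul_zero]
  refine derivation_ext (fun q => by rw [hZ, Derivation.zero_apply]) fun n hn => ?_
  rw [Derivation.zero_apply]
  induction n, hn using Nat.le_induction with
  | base => exact h1
  | succ n hn ih => rw [← hD.1 n hn, hcomm, ih, map_zero]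

lemma lie_D_X0 {D X0 : Derivation ℂ QP QP} (hD : IsD D) (hX0 : IsX0 X0) : ⁅D, X0⁆ = 0 := by
  refine derivation_ext (fun q => ?_) fun n hn => ?_
  · simp only [Derivation.commutator_apply, Derivation.zero_apply, hX0.2, hD.2, map_zsmul,
      Derivation.leibniz, hX0.1 1 le_rfl, smul_eq_mul, mul_zero, add_zero, mul_smul_comm, sub_self]
  · rw [Derivation.commutator_apply, hX0.1 n hn, hD.1 n hn, hX0.1 _ (Nat.le_add_left 1 n),
      map_zero, sub_zero, Derivation.zero_apply]

lemma lie_D_Xf {D X0 Xf : Derivation ℂ QP QP} {f : QP} (hD : IsD D) (hX0 : IsX0 X0)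
    (hXf : IsXf D f Xf) : ⁅D, Xf⁆ = -(f • X0) := by
  refine derivation_ext (fun q => ?_) fun n hn => ?_
  · have h1 : Xf (uvar 1) = f := hXf.2 1 le_rfl
    simp only [Derivation.commutator_apply, Derivation.neg_apply, Derivation.smul_apply, hX0.2,
      hD.2, hXf.1, map_zsmul, Derivation.leibniz, h1, smul_eq_mul, mul_zero, zero_add, map_zero,
      zero_sub, mul_smul_comm, mul_comm (E q) f]
  · obtain ⟨m, rfl⟩ := Nat.exists_eq_add_of_le' hn
    simp only [Derivation.commutator_apply, Derivation.neg_apply, Derivation.smul_apply,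
      hX0.1 _ hn, hD.1 _ hn, hXf.2 _ hn, hXf.2 (m + 1 + 1) (Nat.le_add_left 1 _),
      Nat.add_sub_cancel, Function.iterate_succ_apply', sub_self, smul_zero, neg_zero]

/-- `X₀` commutes with `D`, hence the weight of `E q` under `X₀` passes to `X_{E q}`. -/
lemma lie_X0_Xf {D X0 Xf : Derivation ℂ QP QP} {q : ℤ} (hD : IsD D) (hX0 : IsX0 X0)
    (hXf : IsXf D (E q) Xf) : ⁅X0, Xf⁆ = q • Xf := by
  have hcomm : ∀ a, X0 (D a) = D (X0 a) := fun a => by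
    have := congrArg (fun W : Derivation ℂ QP QP => W a) (lie_D_X0 hD hX0)
    simp only [Derivation.commutator_apply, Derivation.zero_apply] at this
    exact (sub_eq_zero.mp this).symm
  have hit : ∀ m : ℕ, X0 ((⇑D)^[m] (E q)) = q • (⇑D)^[m] (E q) := by
    intro m
    induction m with
    | zero => exact hX0.2 q
    | succ m ih => rw [Function.iterate_succ_apply', hcomm, ih, map_zsmul]
  refine derivation_ext (fun p => ?_) fun n hn => ?_
  · simp only [Derivation.commutator_apply, Derivation.smul_apply, hX0.2, hXf.1, map_zsmul,
      map_zero, smul_zero, sub_self]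
  · simp only [Derivation.commutator_apply, Derivation.smul_apply, hX0.1 n hn, hXf.2 n hn, hit,
      map_zero, sub_zero]

/-- With `X₃' := ⁅X₁', X₂'⁆`, `X₄' := -⁅X₁', X₃'⁆`, `X₅' := ⁅X₂', X₃'⁆`
one has `⁅X₁', X₄'⁆ = 0` and `⁅X₂', X₅'⁆ = 0`. -/
theorem stmt_6 (D X0 X1 Xm X2 X3 X4 X5 : Derivation ℂ QP QP)
    (hD : IsD D) (hX0 : IsX0 X0)
    (hX1 : IsXf D (E 1) X1) (hXm : IsXf D (E (-1)) Xm) (hX2 : X2 = -Xm)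
    (hX3 : X3 = ⁅X1, X2⁆) (hX4 : X4 = -⁅X1, X3⁆) (hX5 : X5 = ⁅X2, X3⁆) :
    ⁅X1, X4⁆ = 0 ∧ ⁅X2, X5⁆ = 0 := by
  have k1 : ∀ q, X1 (E q) = 0 := hX1.1
  have k2 : ∀ q, X2 (E q) = 0 := fun q => by rw [hX2, Derivation.neg_apply, hXm.1, neg_zero]
  have d1 : ⁅D, X1⁆ = -(E 1 • X0) := lie_D_Xf hD hX0 hX1
  have d2 : ⁅D, X2⁆ = E (-1) • X0 := by
    rw [hX2, derivation_lie_neg, lie_D_Xf hD hX0 hXm]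
    exact derivation_neg_neg _
  have w1 : ⁅X0, X1⁆ = X1 := by rw [lie_X0_Xf hD hX0 hX1, one_smul]
  have w2 : ⁅X0, X2⁆ = -X2 := by
    rw [hX2, derivation_lie_neg, lie_X0_Xf hD hX0 hXm, neg_smul, one_smul]
  have kill : ∀ {Y Z : Derivation ℂ QP QP}, (∀ q, Y (E q) = 0) → (∀ q, Z (E q) = 0) →
      ∀ q, (⁅Y, Z⁆ : Derivation ℂ QP QP) (E q) = 0 := fun hY hZ q => by
    rw [Derivation.commutator_apply, hY, hZ, map_zero, map_zero, sub_zero]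
  have s1 : ⁅X1, ⁅X1, ⁅X1, X2⁆⁆⁆ = 0 :=
    eq_zero_of_lie_D_eq_zero hD (kill k1 (kill k1 (kill k1 k2)))
      (lie_D_serre (X0 := X0) (ε := 1) (by norm_num) (k1 1) (k1 (-1)) (k2 1)
        (by rw [d1, one_smul]) (by rw [d2, one_smul]) (by rw [w1, one_smul])
        (by rw [w2, one_smul]))
  have s2 : ⁅X2, ⁅X2, ⁅X2, X1⁆⁆⁆ = 0 :=
    eq_zero_of_lie_D_eq_zero hD (kill k2 (kill k2 (kill k2 k1)))
      (lie_D_serre (X0 := X0) (ε := -1) (by norm_num) (k2 (-1)) (k2 1) (k1 (-1))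
        (by rw [d2, neg_smul, one_smul]; exact (derivation_neg_neg _).symm) (by rw [d1, neg_smul, one_smul])
        (by rw [w2, neg_smul, one_smul]) (by rw [w1, neg_smul, one_smul]; exact (derivation_neg_neg _).symm))
  constructor
  · rw [hX4, hX3, derivation_lie_neg, s1]
    exact derivation_neg_zero
  · rw [hX5, hX3, ← derivation_lie_skew X1 X2, derivation_lie_neg, derivation_lie_neg, s2]
    exact derivation_neg_zero
end
end

section
/- For all i, j ≥ 0 one has ⁅eᵢ, eⱼ⁆ = c(i,j) • e_{i+j}, where c(i,j) = 1 if j − i ≡ 1 (mod 3), c(i,j) = 0 if j ≡ i (mod 3), and c(i,j) = −1 if j − i ≡ 2 (mod 3). -/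
/-! Write `i = 3a + r` and `j = 3b + s` with `r, s < 3`. The `eₙ` are `h/2`, `E₁₂/2` and `E₂₁`
multiplied by powers of `t`, so by bilinearity each of the nine pairs `(r, s)` reduces to a bracket
in `sl(2)`: `[h, E₁₂] = 2 E₁₂`, `[h, E₂₁] = -2 E₂₁`, `[E₁₂, E₂₁] = h`, the powers of `t`
multiplying. The exponents match those of `e_{i+j}` because `e_{3k+2}` carries the exponent
`k + 1`: in the case `(r, s) = (1, 2)`, say, both sides have exponent `a + b + 1`. For
`r = s` the bracket vanishes, as does `c(i, j)`.
-/

set_option synthInstance.maxHeartbeats 1000000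
set_option maxHeartbeats 1000000

noncomputable section

open Polynomial Matrix

/-- The standard basis `eₙ` of the non-negative part `sl(2,ℂ) ⊗ ℂ[t]` of the loop
algebra of `sl(2,ℂ)`: `e_{3k} = (1/2)·diag(tᵏ, -tᵏ)`, `e_{3k+1} = (1/2)·tᵏ·E₁₂`,
`e_{3k+2} = t^{k+1}·E₂₁`. -/
def ee (n : ℕ) : Matrix (Fin 2) (Fin 2) ℂ[X] :=
  if n % 3 = 0 then (1 / 2 : ℂ) • !![X ^ (n / 3), 0; 0, -X ^ (n / 3)]
  else if n % 3 = 1 then (1 / 2 : ℂ) • !![0, X ^ (n / 3); 0, 0]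
  else !![0, 0; X ^ (n / 3 + 1), 0]

/-- The structure constant `c(i,j)`: `1` if `j - i ≡ 1 (mod 3)`, `0` if
`j ≡ i (mod 3)`, `-1` if `j - i ≡ 2 (mod 3)`. -/
def cconst (i j : ℕ) : ℤ :=
  if ((j : ℤ) - (i : ℤ)) % 3 = 1 then 1
  else if ((j : ℤ) - (i : ℤ)) % 3 = 0 then 0
  else -1

/-- The scalar `1/2` is written as a constant polynomial inside the entries, so that identities
between the `ee n` become commutative-ring identities in `ℂ[X]`. -/
lemma ee_zero_mod (k : ℕ) : ee (3 * k) = !![C (1 / 2) * X ^ k, 0; 0, -(C (1 / 2) * X ^ k)] := by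
  have h1 : 3 * k % 3 = 0 := by omega
  have h2 : 3 * k / 3 = k := by omega
  simp [ee, h1, h2, smul_eq_C_mul]

lemma ee_one_mod (k : ℕ) : ee (3 * k + 1) = !![0, C (1 / 2) * X ^ k; 0, 0] := by
  have h1 : (3 * k + 1) % 3 = 1 := by omega
  have h2 : (3 * k + 1) / 3 = k := by omega
  simp [ee, h1, h2, smul_eq_C_mul]

lemma ee_two_mod (k : ℕ) : ee (3 * k + 2) = !![0, 0; X ^ (k + 1), 0] := by
  have h1 : (3 * k + 2) % 3 = 2 := by omega
  have h2 : (3 * k + 2) / 3 = k := by omega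
  simp [ee, h1, h2]

lemma cconst_one {i j : ℕ} (h : ((j : ℤ) - i) % 3 = 1) : cconst i j = 1 := by
  simp [cconst, h]

lemma cconst_zero {i j : ℕ} (h : ((j : ℤ) - i) % 3 = 0) : cconst i j = 0 := by
  simp [cconst, h]

lemma cconst_neg {i j : ℕ} (h : ((j : ℤ) - i) % 3 = 2) : cconst i j = -1 := by
  simp [cconst, h]

lemma C_half_add : (C (1 / 2) : ℂ[X]) + C (1 / 2) = 1 := by
  rw [← C_add, ← C_1]
  norm_num

/-- The structure relations `⁅eᵢ, eⱼ⁆ = c(i,j) • e_{i+j}` of the non-negative part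
of the loop algebra of `sl(2,ℂ)`. -/
theorem stmt_16 : ∀ i j : ℕ, ⁅ee i, ee j⁆ = cconst i j • ee (i + j) := by
  intro i j
  -- `1/2` as a constant polynomial is opaque to `grind`, which recombines the halves through `hc`.
  have hc := C_half_add
  have split : ∀ n : ℕ, ∃ k, n = 3 * k ∨ n = 3 * k + 1 ∨ n = 3 * k + 2 := fun n =>
    ⟨n / 3, by omega⟩
  obtain ⟨a, rfl | rfl | rfl⟩ := split i <;> obtain ⟨b, rfl | rfl | rfl⟩ := split j
  · rw [cconst_zero (by omega), zero_smul, ee_zero_mod, ee_zero_mod, Ring.lie_def]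
    ext1 p q
    fin_cases p <;> fin_cases q <;> simp <;> ring
  · rw [cconst_one (by omega), one_smul,
      show 3 * a + (3 * b + 1) = 3 * (a + b) + 1 by ring, ee_zero_mod, ee_one_mod, ee_one_mod, Ring.lie_def]
    ext1 p q
    fin_cases p <;> fin_cases q <;> simp <;> grind
  · rw [cconst_neg (by omega), neg_smul, one_smul,
      show 3 * a + (3 * b + 2) = 3 * (a + b) + 2 by ring, ee_zero_mod, ee_two_mod, ee_two_mod, Ring.lie_def]
    ext1 p q
    fin_cases p <;> fin_cases q <;> simp <;> grind
  · rw [cconst_neg (by omega), neg_smul, one_smul,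
      show 3 * a + 1 + (3 * b) = 3 * (a + b) + 1 by ring, ee_one_mod, ee_zero_mod, ee_one_mod, Ring.lie_def]
    ext1 p q
    fin_cases p <;> fin_cases q <;> simp <;> grind
  · rw [cconst_zero (by omega), zero_smul, ee_one_mod, ee_one_mod, Ring.lie_def]
    ext1 p q
    fin_cases p <;> fin_cases q <;> simp
  · rw [cconst_one (by omega), one_smul,
      show 3 * a + 1 + (3 * b + 2) = 3 * (a + b + 1) by ring, ee_one_mod, ee_two_mod, ee_zero_mod, Ring.lie_def]
    ext1 p q
    fin_cases p <;> fin_cases q <;> simp <;> grind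
  · rw [cconst_one (by omega), one_smul,
      show 3 * a + 2 + (3 * b) = 3 * (a + b) + 2 by ring, ee_two_mod, ee_zero_mod, ee_two_mod, Ring.lie_def]
    ext1 p q
    fin_cases p <;> fin_cases q <;> simp <;> grind
  · rw [cconst_neg (by omega), neg_smul, one_smul,
      show 3 * a + 2 + (3 * b + 1) = 3 * (a + b + 1) by ring, ee_two_mod, ee_one_mod, ee_zero_mod, Ring.lie_def]
    ext1 p q
    fin_cases p <;> fin_cases q <;> simp <;> grind
  · rw [cconst_zero (by omega), zero_smul, ee_two_mod, ee_two_mod, Ring.lie_def]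
    ext1 p q
    fin_cases p <;> fin_cases q <;> simp
end
end

section
/- For every n ≥ 1 one has V(V₁, n) = span{X₀} ⊔ V(W₁, n) (join of subspaces of L). Moreover, if X₀ does not lie in the Lie subalgebra of L generated by {x₁, …, x_q}, then dim_K V(V₁, n) = dim_K V(W₁, n) + 1 for every n ≥ 1; in particular the growth functions of the Lie algebra generated by span{X₀} ⊕ span{x₁,…,x_q} and of the subalgebra generated by span{x₁,…,x_q} differ by the constant 1 = dim of the toral subalgebra span{X₀}. -/
/-!
Since `X₀` acts diagonally on the generators, `ad X₀` maps `span{x₁, …, x_q}` into itself, and being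
a derivation it then maps every `V(W₁, n)` into itself (`lie_mem_Vfun`). In a bracket
`⁅a X₀ + u, b X₀ + v⁆ = a ⁅X₀, v⁆ - b ⁅X₀, u⁆ + ⁅u, v⁆` with `u ∈ V(W₁, i)` and `v ∈ V(W₁, j)`, the
first two terms therefore cost no additional length, so adjoining `X₀` to the generators enlarges each
`V(W₁, n)` by the line `span{X₀}` only (`Vfun_span_sup`). All of `V(W₁, n)` lies in the Lie subalgebra
generated by the `xⱼ` (`Vfun_le_lieSubalgebra`) and is finite-dimensional (`finiteDimensional_Vfun`);
if `X₀` is outside that subalgebra, the sum is direct and the dimension goes up by exactly one.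
-/

set_option synthInstance.maxHeartbeats 1000000
set_option maxHeartbeats 1000000

noncomputable section

variable {K : Type*} [Field K] {L : Type*} [LieRing L] [LieAlgebra K L]

/-- The `K`-span of brackets `⁅a, b⁆` with `a ∈ P`, `b ∈ Q`. -/
def bracketSpan (P Q : Submodule K L) : Submodule K L :=
  Submodule.span K {z : L | ∃ a ∈ P, ∃ b ∈ Q, z = ⁅a, b⁆}

/-- `V(U, n)`: the span of products of length at most `n` in elements of `U`:
`V(U, 1) = U` and
`V(U, n+1) = V(U, n) ⊔ ⨆_{i+j = n+1, i,j ≥ 1} span{⁅a,b⁆ : a ∈ V(U,i), b ∈ V(U,j)}`.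
(We set `V(U, 0) = ⊥`.) -/
def Vfun (U : Submodule K L) : ℕ → Submodule K L
  | 0 => ⊥
  | 1 => U
  | (n + 2) =>
      Vfun U (n + 1) ⊔
        ⨆ (p : ℕ × ℕ), ⨆ (_ : p.1 + p.2 = n + 2 ∧ 1 ≤ p.1 ∧ 1 ≤ p.2),
          bracketSpan (Vfun U p.1) (Vfun U p.2)
  termination_by n => n
  decreasing_by all_goals omega

theorem lie_mem_bracketSpan {P Q : Submodule K L} {a b : L} (ha : a ∈ P) (hb : b ∈ Q) :
    ⁅a, b⁆ ∈ bracketSpan P Q :=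
  Submodule.subset_span ⟨a, ha, b, hb, rfl⟩

theorem bracketSpan_le {P Q R : Submodule K L} (h : ∀ a ∈ P, ∀ b ∈ Q, ⁅a, b⁆ ∈ R) :
    bracketSpan P Q ≤ R := by
  refine Submodule.span_le.2 ?_
  rintro _ ⟨a, ha, b, hb, rfl⟩
  exact h a ha b hb

theorem Vfun_zero (U : Submodule K L) : Vfun U 0 = ⊥ := by rw [Vfun]

theorem Vfun_one (U : Submodule K L) : Vfun U 1 = U := by rw [Vfun]

theorem Vfun_le_succ (U : Submodule K L) (n : ℕ) : Vfun U n ≤ Vfun U (n + 1) := by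
  cases n with
  | zero => rw [Vfun_zero]; exact bot_le
  | succ n => rw [Vfun.eq_3]; exact le_sup_left

theorem Vfun_mono (U : Submodule K L) : Monotone (Vfun U) :=
  monotone_nat_of_le_succ (Vfun_le_succ U)

theorem lie_mem_Vfun_add {U : Submodule K L} {i j : ℕ} (hi : 1 ≤ i) (hj : 1 ≤ j) {a b : L}
    (ha : a ∈ Vfun U i) (hb : b ∈ Vfun U j) : ⁅a, b⁆ ∈ Vfun U (i + j) := by
  obtain ⟨n, hn⟩ : ∃ n, i + j = n + 2 := ⟨i + j - 2, by omega⟩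
  rw [hn, Vfun.eq_3]
  refine Submodule.mem_sup_right ?_
  exact Submodule.mem_iSup_of_mem (i, j)
    (Submodule.mem_iSup_of_mem ⟨hn, hi, hj⟩ (lie_mem_bracketSpan ha hb))

theorem Vfun_add_two_le {U R : Submodule K L} {n : ℕ} (h₁ : Vfun U (n + 1) ≤ R)
    (h₂ : ∀ i j, i + j = n + 2 → 1 ≤ i → 1 ≤ j →
      ∀ a ∈ Vfun U i, ∀ b ∈ Vfun U j, ⁅a, b⁆ ∈ R) :
    Vfun U (n + 2) ≤ R := by
  rw [Vfun.eq_3]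
  exact sup_le h₁ (iSup₂_le fun p hp => bracketSpan_le (h₂ p.1 p.2 hp.1 hp.2.1 hp.2.2))

theorem Vfun_mono_left {U U' : Submodule K L} (h : U ≤ U') (n : ℕ) : Vfun U n ≤ Vfun U' n := by
  induction n using Nat.strong_induction_on with
  | _ n ih =>
    match n, ih with
    | 0, _ => rw [Vfun_zero]; exact bot_le
    | 1, _ => rwa [Vfun_one, Vfun_one]
    | n + 2, ih =>
      refine Vfun_add_two_le ((ih _ (by omega)).trans (Vfun_le_succ _ _)) ?_
      intro i j hij hi hj a ha b hb
      rw [← hij]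
      exact lie_mem_Vfun_add hi hj (ih i (by omega) ha) (ih j (by omega) hb)

/-- A derivation `ad X` preserving the generating space preserves every term of the filtration. -/
theorem lie_mem_Vfun {U : Submodule K L} {X : L} (h : ∀ u ∈ U, ⁅X, u⁆ ∈ U) (n : ℕ) :
    ∀ u ∈ Vfun U n, ⁅X, u⁆ ∈ Vfun U n := by
  induction n using Nat.strong_induction_on with
  | _ n ih =>
    match n, ih with
    | 0, _ =>
      intro u hu
      rw [Vfun_zero, Submodule.mem_bot] at hu
      rw [hu, lie_zero]
      exact zero_mem _
    | 1, _ => rwa [Vfun_one]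
    | n + 2, ih =>
      suffices H : Vfun U (n + 2) ≤ (Vfun U (n + 2)).comap (LieAlgebra.ad K L X : L →ₗ[K] L) from
        fun u hu => H hu
      refine Vfun_add_two_le (fun u hu => Vfun_le_succ _ _ (ih _ (by omega) u hu)) ?_
      intro i j hij hi hj a ha b hb
      rw [Submodule.mem_comap, LieAlgebra.ad_apply, leibniz_lie, ← hij]
      exact add_mem (lie_mem_Vfun_add hi hj (ih i (by omega) a ha) hb)
        (lie_mem_Vfun_add hi hj ha (ih j (by omega) b hb))

/-- Adjoining to the generating space an element `X` whose adjoint action preserves it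
adds only the line through `X` to each term of the filtration. -/
theorem Vfun_span_sup {W : Submodule K L} {X : L} (h : ∀ u ∈ W, ⁅X, u⁆ ∈ W) {n : ℕ}
    (hn : 1 ≤ n) :
    Vfun (Submodule.span K {X} ⊔ W) n = Submodule.span K {X} ⊔ Vfun W n := by
  apply le_antisymm
  · clear hn
    induction n using Nat.strong_induction_on with
    | _ n ih =>
      match n, ih with
      | 0, _ => rw [Vfun_zero]; exact bot_le
      | 1, _ => rw [Vfun_one, Vfun_one]
      | n + 2, ih =>
        refine Vfun_add_two_le
          ((ih _ (by omega)).trans (sup_le_sup_left (Vfun_le_succ _ _) _)) ?_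
        intro i j hij hi hj a ha b hb
        obtain ⟨y, hy, u, hu, rfl⟩ := Submodule.mem_sup.1 (ih i (by omega) ha)
        obtain ⟨z, hz, v, hv, rfl⟩ := Submodule.mem_sup.1 (ih j (by omega) hb)
        obtain ⟨s, rfl⟩ := Submodule.mem_span_singleton.1 hy
        obtain ⟨t, rfl⟩ := Submodule.mem_span_singleton.1 hz
        have hXu := Vfun_mono W (show i ≤ n + 2 by omega) (lie_mem_Vfun h i u hu)
        have hXv := Vfun_mono W (show j ≤ n + 2 by omega) (lie_mem_Vfun h j v hv)
        have huv := lie_mem_Vfun_add hi hj hu hv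
        rw [hij] at huv
        have e : ⁅s • X + u, t • X + v⁆ = s • ⁅X, v⁆ - t • ⁅X, u⁆ + ⁅u, v⁆ := by
          rw [← lie_skew X u]
          simp only [add_lie, lie_add, smul_lie, lie_smul, lie_self, smul_zero, smul_neg, zero_add]
          abel
        rw [e]
        exact Submodule.mem_sup_right
          (add_mem (sub_mem (Submodule.smul_mem _ _ hXv) (Submodule.smul_mem _ _ hXu)) huv)
  · refine sup_le ?_ (Vfun_mono_left le_sup_right n)
    calc Submodule.span K {X} ≤ Vfun (Submodule.span K {X} ⊔ W) 1 := by
          rw [Vfun_one]; exact le_sup_left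
      _ ≤ _ := Vfun_mono _ hn

theorem Vfun_le_lieSubalgebra {U : Submodule K L} {S : LieSubalgebra K L}
    (h : U ≤ S.toSubmodule) (n : ℕ) : Vfun U n ≤ S.toSubmodule := by
  induction n using Nat.strong_induction_on with
  | _ n ih =>
    match n, ih with
    | 0, _ => rw [Vfun_zero]; exact bot_le
    | 1, _ => rwa [Vfun_one]
    | n + 2, ih =>
      refine Vfun_add_two_le (ih _ (by omega)) ?_
      intro i j hij hi hj a ha b hb
      exact S.lie_mem (ih i (by omega) ha) (ih j (by omega) hb)

theorem finiteDimensional_Vfun (U : Submodule K L) [FiniteDimensional K U] (n : ℕ) :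
    FiniteDimensional K (Vfun U n) := by
  induction n with
  | zero => rw [Vfun_zero]; infer_instance
  | succ n ih =>
    cases n with
    | zero => rwa [Vfun_one]
    | succ n =>
      -- By monotonicity the brackets from all the splittings of `n + 2` lie in the image of the
      -- single pair `V(U, n + 1)`, `V(U, n + 1)`, which makes finiteness visible.
      let B := Submodule.map₂ (LieModule.toEnd K L L : L →ₗ[K] L →ₗ[K] L)
        (Vfun U (n + 1)) (Vfun U (n + 1))
      have hfg : (Vfun U (n + 1)).FG := Module.Finite.iff_fg.1 ih
      have hB : (Vfun U (n + 1) ⊔ B).FG := hfg.sup (hfg.map₂ _ hfg)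
      have : FiniteDimensional K ↥(Vfun U (n + 1) ⊔ B) := Module.Finite.iff_fg.2 hB
      refine Submodule.finiteDimensional_of_le (S₂ := Vfun U (n + 1) ⊔ B)
        (Vfun_add_two_le le_sup_left ?_)
      intro i j hij hi hj a ha b hb
      exact Submodule.mem_sup_right (Submodule.apply_mem_map₂ _
        (Vfun_mono U (by omega) ha) (Vfun_mono U (by omega) hb))

/-- Growth of a Lie algebra with a diagonalizable "toral" element `X₀`:
let `x₁, …, x_q` satisfy `⁅X₀, xⱼ⁆ = λⱼ • xⱼ` with all `λⱼ ≠ 0`, and set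
`V₁ := span{X₀, x₁, …, x_q}`, `W₁ := span{x₁, …, x_q}`. Then
`V(V₁, n) = span{X₀} ⊔ V(W₁, n)` for all `n ≥ 1`; moreover, if `X₀` does not lie
in the Lie subalgebra generated by the `xⱼ`, then
`dim V(V₁, n) = dim V(W₁, n) + 1` for all `n ≥ 1`, i.e. the growth functions
differ by the constant `1 = dim span{X₀}`. -/
theorem stmt_19 (X₀ : L) (hX₀ : X₀ ≠ 0) {q : ℕ} (x : Fin q → L) (lam : Fin q → K)
    (hlam : ∀ j, lam j ≠ 0) (hbr : ∀ j, ⁅X₀, x j⁆ = lam j • x j) :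
    (∀ n : ℕ, 1 ≤ n →
      Vfun (Submodule.span K (insert X₀ (Set.range x))) n
        = Submodule.span K {X₀} ⊔ Vfun (Submodule.span K (Set.range x)) n) ∧
    (X₀ ∉ LieSubalgebra.lieSpan K L (Set.range x) →
      ∀ n : ℕ, 1 ≤ n →
        Module.finrank K (Vfun (Submodule.span K (insert X₀ (Set.range x))) n)
          = Module.finrank K (Vfun (Submodule.span K (Set.range x)) n) + 1) := by
  have hW : ∀ u ∈ Submodule.span K (Set.range x), ⁅X₀, u⁆ ∈ Submodule.span K (Set.range x) := by
    suffices H : Submodule.span K (Set.range x) ≤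
        (Submodule.span K (Set.range x)).comap (LieAlgebra.ad K L X₀ : L →ₗ[K] L) from
      fun u hu => H hu
    refine Submodule.span_le.2 ?_
    rintro _ ⟨j, rfl⟩
    change ⁅X₀, x j⁆ ∈ Submodule.span K (Set.range x)
    rw [hbr j]
    exact Submodule.smul_mem _ _ (Submodule.subset_span ⟨j, rfl⟩)
  have key : ∀ n : ℕ, 1 ≤ n →
      Vfun (Submodule.span K (insert X₀ (Set.range x))) n
        = Submodule.span K {X₀} ⊔ Vfun (Submodule.span K (Set.range x)) n := by
    intro n hn
    rw [Submodule.span_insert]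
    exact Vfun_span_sup hW hn
  refine ⟨key, fun hX n hn => ?_⟩
  have : FiniteDimensional K (Submodule.span K (Set.range x)) :=
    FiniteDimensional.span_of_finite K (Set.finite_range x)
  have := finiteDimensional_Vfun (Submodule.span K (Set.range x)) n
  have hnot : X₀ ∉ Vfun (Submodule.span K (Set.range x)) n := fun hmem =>
    hX (Vfun_le_lieSubalgebra (Submodule.span_le.2 LieSubalgebra.subset_lieSpan) n hmem)
  have hdisj : Submodule.span K {X₀} ⊓ Vfun (Submodule.span K (Set.range x)) n = ⊥ :=
    ((Submodule.disjoint_span_singleton' hX₀).2 hnot).symm.eq_bot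
  have hdim := Submodule.finrank_sup_add_finrank_inf_eq (Submodule.span K {X₀})
    (Vfun (Submodule.span K (Set.range x)) n)
  rw [hdisj, finrank_bot, finrank_span_singleton hX₀] at hdim
  rw [key n hn]
  omega
end
end
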